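/- Let p > 1, let r, T, A > 0, let x₀ ∈ ℝⁿ, and let u be a positive classical solution of the differential inequality u_t − Δu ≤ A·u^p on (0,T)×B(x₀,r). Assume that for each ε > 0 there exists a constant C_ε > 0 such that Δu(t,x) ≤ ε(T−t)^{−α−1} + C_ε for all (t,x) ∈ (T/2,T)×B(x₀,r). Then for any k ∈ (0,κ) there exists τ₀ > 0 with the following property: for every t₀ ∈ [max(T−τ₀,0), T) such that (T−t₀)^α u(t₀,x) ≤ k·A^{−α} for all x ∈ B(x₀,r), there exists a constant K > 0 such that u(t,x) ≤ K for all (t,x) ∈ [t₀,T)×B(x₀,r/4). -/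

import Mathlib

open Set Metric Filter

noncomputable def lap {n : ℕ} (g : EuclideanSpace ℝ (Fin n) → ℝ)
    (x : EuclideanSpace ℝ (Fin n)) : ℝ :=
  ∑ i : Fin n, fderiv ℝ (fun y => fderiv ℝ g y (EuclideanSpace.single i 1)) x
    (EuclideanSpace.single i 1)

/-!
Put `α = 1 / (p - 1)` and `m = k A^(-α)`. Near the blow-up time `T` the bound on `Δu` makes `u_t`
smaller than the derivative of the ODE profile `m (T - t)^(-α)`, so `u` stays below this profile
once it starts below it. Since `A m ^ p < α m`, some slightly larger `M` has the same property. In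
the profile `M (θ - t)^(-α)` one may then replace the constant blow-up time by
`θ(x) = T + c (R² - ‖x - x₀‖²)²`: as `‖∇θ‖²` is of order `c (θ - T)` and `|Δθ|` of order `c`, it is
still a supersolution for small `c`. It dominates `u` at the initial time and on the sphere of
radius `R`, hence everywhere in between, and it is bounded up to time `T` on smaller balls.
-/

open Module Laplacian
open scoped Topology

section SecondDerivatives

theorem deriv_deriv_nonpos_of_isLocalMax {f : ℝ → ℝ} {a : ℝ} (hmax : IsLocalMax f a)
    (hf : ContinuousAt f a) : deriv (deriv f) a ≤ 0 := by
  by_contra! hpos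
  have hmin : IsLocalMin f a := isLocalMin_of_deriv_deriv_pos hpos hmax.deriv_eq_zero hf
  have hconst : f =ᶠ[𝓝 a] fun _ => f a := by
    filter_upwards [hmin, hmax] with s h₁ h₂ using le_antisymm h₂ h₁
  have hzero : deriv (deriv f) a = 0 := by
    simpa only [deriv_const', deriv_const] using hconst.deriv.deriv_eq
  exact hpos.ne' hzero

theorem nonneg_of_hasDerivAt_of_isMaxOn_Icc {f : ℝ → ℝ} {f' a b : ℝ} (hab : a < b)
    (hf : HasDerivAt f f' b) (hmax : IsMaxOn f (Icc a b) b) : 0 ≤ f' := by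
  have hcone : a - b ∈ posTangentConeAt (Icc a b) b :=
    sub_mem_posTangentConeAt_of_segment_subset (by rw [segment_symm, segment_eq_Icc hab.le])
  have hle := hmax.localize.hasFDerivWithinAt_nonpos hf.hasDerivWithinAt.hasFDerivWithinAt hcone
  simp only [ContinuousLinearMap.toSpanSingleton_apply, smul_eq_mul] at hle
  nlinarith

variable {E F : Type*} [NormedAddCommGroup E] [NormedSpace ℝ E]
  [NormedAddCommGroup F] [NormedSpace ℝ F]

theorem fderiv_fderiv_apply_eq_iteratedFDeriv {f : E → F} {x : E}
    (hf : DifferentiableAt ℝ (fderiv ℝ f) x) (v w : E) :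
    fderiv ℝ (fun y => fderiv ℝ f y w) x v = iteratedFDeriv ℝ 2 f x ![v, w] := by
  rw [iteratedFDeriv_two_apply, fderiv_clm_apply hf (differentiableAt_const w)]
  simp

theorem iteratedFDeriv_two_apply_eq_deriv_deriv {f : E → F} {x : E} (hf : ContDiffAt ℝ 2 f x)
    (v : E) :
    iteratedFDeriv ℝ 2 f x ![v, v] = deriv (deriv fun s : ℝ => f (x + s • v)) 0 := by
  have hline (s : ℝ) : HasDerivAt (fun s : ℝ => x + s • v) v s := by
    simpa using ((hasDerivAt_id s).smul_const v).const_add x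
  have htend : Tendsto (fun s : ℝ => x + s • v) (𝓝 0) (𝓝 x) := by
    simpa using (hline 0).continuousAt.tendsto
  have hfst : deriv (fun s : ℝ => f (x + s • v)) =ᶠ[𝓝 0] fun s => fderiv ℝ f (x + s • v) v := by
    filter_upwards [htend.eventually (hf.eventually (by simp))] with s hs
    exact ((hs.differentiableAt two_ne_zero).hasFDerivAt.comp_hasDerivAt s (hline s)).deriv
  have hdiff : DifferentiableAt ℝ (fderiv ℝ f) x :=
    (hf.fderiv_right (m := 1) le_rfl).differentiableAt one_ne_zero
  have hsnd : HasFDerivAt (fun y => fderiv ℝ f y v) (fderiv ℝ (fun y => fderiv ℝ f y v) x)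
      (x + (0 : ℝ) • v) := by
    simpa using (hdiff.clm_apply (differentiableAt_const v)).hasFDerivAt
  rw [hfst.deriv_eq, ← fderiv_fderiv_apply_eq_iteratedFDeriv hdiff]
  exact (hsnd.comp_hasDerivAt (0 : ℝ) (hline 0)).deriv.symm

theorem iteratedFDeriv_two_nonpos_of_isLocalMax {f : E → ℝ} {x : E} (hf : ContDiffAt ℝ 2 f x)
    (hmax : IsLocalMax f x) (v : E) : iteratedFDeriv ℝ 2 f x ![v, v] ≤ 0 := by
  have hline : ContinuousAt (fun s : ℝ => x + s • v) 0 := by fun_prop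
  rw [iteratedFDeriv_two_apply_eq_deriv_deriv hf]
  refine deriv_deriv_nonpos_of_isLocalMax ?_ ?_
  · have htend : Tendsto (fun s : ℝ => x + s • v) (𝓝 0) (𝓝 x) := by simpa using hline.tendsto
    simpa [IsLocalMax, IsMaxFilter] using htend.eventually hmax
  · exact ContinuousAt.comp (g := f) (by simpa using hf.continuousAt) hline

end SecondDerivatives

theorem lap_eq_laplacian {n : ℕ} {f : EuclideanSpace ℝ (Fin n) → ℝ}
    {x : EuclideanSpace ℝ (Fin n)} (hf : ContDiffAt ℝ 2 f x) : lap f x = Δ f x := by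
  have hdiff : DifferentiableAt ℝ (fderiv ℝ f) x :=
    (hf.fderiv_right (m := 1) le_rfl).differentiableAt one_ne_zero
  simp only [lap, fderiv_fderiv_apply_eq_iteratedFDeriv hdiff,
    InnerProductSpace.laplacian_eq_iteratedFDeriv_orthonormalBasis f
      (EuclideanSpace.basisFun (Fin n) ℝ), EuclideanSpace.basisFun_apply]

section Laplacian

variable {E : Type*} [NormedAddCommGroup E] [InnerProductSpace ℝ E]

theorem hasFDerivAt_norm_sub_sq (x₀ x : E) :
    HasFDerivAt (fun y => ‖y - x₀‖ ^ 2) ((2 : ℝ) • innerSL ℝ (x - x₀)) x := by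
  have hcomp := (hasStrictFDerivAt_norm_sq (x - x₀)).hasFDerivAt.comp x
    ((hasFDerivAt_id x).sub_const x₀)
  rwa [ContinuousLinearMap.comp_id, ← ofNat_smul_eq_nsmul ℝ] at hcomp

theorem norm_fderiv_norm_sub_sq (x₀ x : E) :
    ‖fderiv ℝ (fun y => ‖y - x₀‖ ^ 2) x‖ = 2 * ‖x - x₀‖ := by
  rw [(hasFDerivAt_norm_sub_sq x₀ x).fderiv, norm_smul, innerSL_apply_norm, Real.norm_ofNat]

variable [FiniteDimensional ℝ E]

theorem laplacian_nonpos_of_isLocalMax {f : E → ℝ} {x : E} (hf : ContDiffAt ℝ 2 f x)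
    (hmax : IsLocalMax f x) : Δ f x ≤ 0 := by
  rw [InnerProductSpace.laplacian_eq_iteratedFDeriv_stdOrthonormalBasis]
  exact Finset.sum_nonpos fun i _ => iteratedFDeriv_two_nonpos_of_isLocalMax hf hmax _

theorem laplacian_comp {f : E → ℝ} {x : E} {g g' : ℝ → ℝ} {g'' : ℝ} (hf : ContDiffAt ℝ 2 f x)
    (hg : ∀ᶠ s in 𝓝 (f x), HasDerivAt g (g' s) s) (hg' : HasDerivAt g' g'' (f x)) :
    Δ (fun y => g (f y)) x = g'' * ‖fderiv ℝ f x‖ ^ 2 + g' (f x) * Δ f x := by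
  have hfst : fderiv ℝ (fun y => g (f y)) =ᶠ[𝓝 x] fun y => g' (f y) • fderiv ℝ f y := by
    filter_upwards [hf.continuousAt.eventually hg, hf.eventually (by simp)] with y hgy hfy
    exact (hgy.comp_hasFDerivAt y (hfy.differentiableAt two_ne_zero).hasFDerivAt).fderiv
  have hdiff : DifferentiableAt ℝ (fderiv ℝ f) x :=
    (hf.fderiv_right (m := 1) le_rfl).differentiableAt one_ne_zero
  have hsnd : HasFDerivAt (fun y => g' (f y) • fderiv ℝ f y)
      (g' (f x) • fderiv ℝ (fderiv ℝ f) x + (g'' • fderiv ℝ f x).smulRight (fderiv ℝ f x)) x :=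
    (hg'.comp_hasFDerivAt x (hf.differentiableAt two_ne_zero).hasFDerivAt).smul hdiff.hasFDerivAt
  let b := stdOrthonormalBasis ℝ E
  simp only [InnerProductSpace.laplacian_eq_iteratedFDeriv_orthonormalBasis _ b, b.norm_dual,
    iteratedFDeriv_two_apply, Finset.mul_sum, ← Finset.sum_add_distrib]
  refine Finset.sum_congr rfl fun i _ => ?_
  rw [hfst.fderiv_eq, hsnd.fderiv]
  simp
  ring

theorem laplacian_norm_sub_sq (x₀ x : E) :
    Δ (fun y => ‖y - x₀‖ ^ 2) x = 2 * finrank ℝ E := by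
  have hfst : fderiv ℝ (fun y => ‖y - x₀‖ ^ 2) = fun y => (2 : ℝ) • innerSL ℝ (y - x₀) :=
    funext fun y => (hasFDerivAt_norm_sub_sq x₀ y).fderiv
  have hsnd : HasFDerivAt (fun y => (2 : ℝ) • innerSL ℝ (y - x₀)) ((2 : ℝ) • innerSL ℝ) x :=
    ((innerSL ℝ).hasFDerivAt.comp x ((hasFDerivAt_id x).sub_const x₀)).const_smul (2 : ℝ)
  let b := stdOrthonormalBasis ℝ E
  simp only [InnerProductSpace.laplacian_eq_iteratedFDeriv_orthonormalBasis _ b,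
    iteratedFDeriv_two_apply, hfst, hsnd.fderiv]
  have hb (i : Fin (finrank ℝ E)) : innerSL ℝ (b i) (b i) = 1 := by simp
  calc ∑ i, 2 * innerSL ℝ (b i) (b i) = ∑ _ : Fin (finrank ℝ E), (2 : ℝ) := by simp [hb]
    _ = 2 * finrank ℝ E := by simp [mul_comm]

end Laplacian

section MaximumPrinciple

theorem exists_first_zero {X : Type*} [TopologicalSpace X] {K : Set X} (hK : IsCompact K)
    {v : ℝ → X → ℝ} {a b : ℝ} (hv_x : ∀ t ∈ Ico a b, ContinuousOn (v t) K)
    (hv_t : ∀ x ∈ K, ∀ t ∈ Ico a b, ContinuousAt (fun s => v s x) t)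
    (hv_right : ∀ t ∈ Ico a b, ∀ δ > 0, ∀ᶠ s in 𝓝[>] t, ∀ x ∈ K, v s x < v t x + δ)
    (hv_init : ∀ x ∈ K, v a x < 0) (hv_nonneg : ∃ t ∈ Ico a b, ∃ x ∈ K, 0 ≤ v t x) :
    ∃ t ∈ Ioo a b, ∃ x ∈ K, v t x = 0 ∧ ∀ s ∈ Icc a t, ∀ y ∈ K, v s y ≤ 0 := by
  set B : Set ℝ := {t ∈ Ico a b | ∃ x ∈ K, 0 ≤ v t x}
  have hB_ne : B.Nonempty := hv_nonneg
  have hB_bdd : BddBelow B := ⟨a, fun t ht => ht.1.1⟩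
  set t := sInf B
  have ht : t ∈ Ico a b := by
    obtain ⟨s, hs⟩ := hB_ne
    exact ⟨le_csInf ⟨s, hs⟩ fun _ h => h.1.1, (csInf_le hB_bdd hs).trans_lt hs.1.2⟩
  have hneg : ∀ s ∈ Ico a t, ∀ y ∈ K, v s y < 0 := by
    intro s hs y hy
    by_contra! h
    exact (csInf_le hB_bdd ⟨⟨hs.1, hs.2.trans ht.2⟩, y, hy, h⟩).not_gt hs.2
  -- The right semicontinuity propagates negativity past `t`, so the infimum is attained.
  have hattained : ∃ x ∈ K, 0 ≤ v t x := by
    by_contra! hlt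
    obtain ⟨-, -, y, hy, -⟩ := hv_nonneg
    obtain ⟨x, hx, hmax⟩ := hK.exists_isMaxOn ⟨y, hy⟩ (hv_x t ht)
    have hright : ∀ᶠ s in 𝓝[≥] t, ∀ y ∈ K, v s y < 0 := by
      rw [← Ioi_insert, nhdsWithin_insert, eventually_sup]
      refine ⟨eventually_pure.2 hlt, ?_⟩
      filter_upwards [hv_right t ht _ (neg_pos.2 (hlt x hx))] with s hs y hy
      linarith [hs y hy, isMaxOn_iff.1 hmax y hy]
    obtain ⟨s, hsB, hs⟩ := (isGLB_csInf hB_ne hB_bdd).frequently_mem hB_ne |>.and_eventually hright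
      |>.exists
    obtain ⟨-, z, hz, hzs⟩ := hsB
    exact hzs.not_gt (hs z hz)
  obtain ⟨x, hx, hxt⟩ := hattained
  have hat : a < t := ht.1.lt_of_ne fun h => hxt.not_gt (h ▸ hv_init x hx)
  have hle : ∀ y ∈ K, v t y ≤ 0 := fun y hy =>
    le_of_tendsto ((hv_t y hy t ht).mono_left nhdsWithin_le_nhds)
      (mem_of_superset (Ico_mem_nhdsLT hat) fun s hs => (hneg s hs y hy).le)
  refine ⟨t, ⟨hat, ht.2⟩, x, hx, (hle x hx).antisymm hxt, fun s hs y hy => ?_⟩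
  rcases hs.2.lt_or_eq with h | rfl
  exacts [(hneg s ⟨hs.1, h⟩ y hy).le, hle y hy]

theorem eventually_forall_lt_add_of_deriv_le {X : Type*} {K : Set X} {v : ℝ → X → ℝ}
    {t c L δ : ℝ} (htc : t < c) (hδ : 0 < δ)
    (hv : ∀ x ∈ K, ∀ s ∈ Icc t c, DifferentiableAt ℝ (fun s => v s x) s)
    (hL : ∀ x ∈ K, ∀ s ∈ Icc t c, deriv (fun s => v s x) s ≤ L) :
    ∀ᶠ s in 𝓝[>] t, ∀ x ∈ K, v s x < v t x + δ := by
  have hsmall : ∀ᶠ s in 𝓝[>] t, L * (s - t) < δ := by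
    have hcont : ContinuousAt (fun s => L * (s - t)) t := by fun_prop
    exact (hcont.eventually_lt_const (by simpa using hδ)).filter_mono nhdsWithin_le_nhds
  filter_upwards [hsmall, Ioo_mem_nhdsGT htc] with s hs hsc x hx
  have hsub : Icc t s ⊆ Icc t c := Icc_subset_Icc_right hsc.2.le
  have hmvt : v s x - v t x ≤ L * (s - t) :=
    (convex_Icc t s).image_sub_le_mul_sub_of_deriv_le (f := fun s => v s x)
      (fun τ hτ => (hv x hx τ (hsub hτ)).continuousAt.continuousWithinAt)
      (fun τ hτ => (hv x hx τ (hsub (interior_subset hτ))).differentiableWithinAt)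
      (fun τ hτ => hL x hx τ (hsub (interior_subset hτ)))
      t (left_mem_Icc.2 hsc.1.le) s (right_mem_Icc.2 hsc.1.le) hsc.1.le
  linarith

variable {E : Type*} [NormedAddCommGroup E] [InnerProductSpace ℝ E] [FiniteDimensional ℝ E]

theorem neg_of_deriv_lt_laplacian_of_eq_zero {K : Set E} (hK : IsCompact K) {v : ℝ → E → ℝ}
    {a b : ℝ} (hv_t : ∀ t ∈ Ico a b, ∀ x ∈ K, DifferentiableAt ℝ (fun s => v s x) t)
    (hv_x : ∀ t ∈ Ico a b, ∀ x ∈ K, ContDiffAt ℝ 2 (v t) x)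
    (hv_deriv : ∀ c < b, ∃ L, ∀ t ∈ Icc a c, ∀ x ∈ K, deriv (fun s => v s x) t ≤ L)
    (hv_init : ∀ x ∈ K, v a x < 0) (hv_frontier : ∀ t ∈ Ico a b, ∀ x ∈ frontier K, v t x < 0)
    (hv_lt : ∀ t ∈ Ico a b, ∀ x ∈ interior K, v t x = 0 →
      deriv (fun s => v s x) t < Δ (v t) x) :
    ∀ t ∈ Ico a b, ∀ x ∈ K, v t x < 0 := by
  by_contra! hv_nonneg
  have hv_right (t : ℝ) (ht : t ∈ Ico a b) (δ : ℝ) (hδ : δ > 0) :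
      ∀ᶠ s in 𝓝[>] t, ∀ x ∈ K, v s x < v t x + δ := by
    obtain ⟨c, htc, hcb⟩ := exists_between ht.2
    obtain ⟨L, hL⟩ := hv_deriv c hcb
    exact eventually_forall_lt_add_of_deriv_le htc hδ
      (fun x hx s hs => hv_t s ⟨ht.1.trans hs.1, hs.2.trans_lt hcb⟩ x hx)
      (fun x hx s hs => hL s ⟨ht.1.trans hs.1, hs.2⟩ x hx)
  obtain ⟨t, ht, x, hx, hzero, hle⟩ := exists_first_zero hK
    (fun t ht x hx => (hv_x t ht x hx).continuousAt.continuousWithinAt)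
    (fun x hx t ht => (hv_t t ht x hx).continuousAt) hv_right hv_init hv_nonneg
  have ht' : t ∈ Ico a b := Ioo_subset_Ico_self ht
  have hx_int : x ∈ interior K := by
    by_contra h
    exact (hv_frontier t ht' x ⟨subset_closure hx, h⟩).ne hzero
  have hderiv : 0 ≤ deriv (fun s => v s x) t :=
    nonneg_of_hasDerivAt_of_isMaxOn_Icc ht.1 (hv_t t ht' x hx).hasDerivAt
      (isMaxOn_iff.2 fun s hs => hzero ▸ hle s hs x hx)
  have hlap : Δ (v t) x ≤ 0 := by
    refine laplacian_nonpos_of_isLocalMax (hv_x t ht' x hx) ?_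
    filter_upwards [mem_interior_iff_mem_nhds.1 hx_int] with y hy
    exact hzero ▸ hle t (right_mem_Icc.2 ht.1.le) y hy
  exact (hlap.trans hderiv).not_gt (hv_lt t ht' x hx_int hzero)

end MaximumPrinciple

section Rpow

variable {α p : ℝ}

theorem mul_rpow_neg_rpow (hαp : α * p = α + 1) {m s : ℝ} (hm : 0 ≤ m) (hs : 0 ≤ s) :
    (m * s ^ (-α)) ^ p = m ^ p * s ^ (-α - 1) := by
  rw [Real.mul_rpow hm (Real.rpow_nonneg hs _), ← Real.rpow_mul hs, neg_mul, hαp, neg_add']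

theorem mul_rpow_lt_of_lt_rpow_self (hα : 0 < α) (hαp : α * p = α + 1) {A k : ℝ} (hA : 0 < A)
    (hk : k ∈ Ioo 0 (α ^ α)) : A * (k * A ^ (-α)) ^ p < α * (k * A ^ (-α)) := by
  have hp : 0 < p - 1 := pos_of_mul_pos_right (by linarith : 0 < α * (p - 1)) hα.le
  have hkα : k ^ (p - 1) < α :=
    calc k ^ (p - 1) < (α ^ α) ^ (p - 1) := Real.rpow_lt_rpow hk.1.le hk.2 hp
      _ = α := by rw [← Real.rpow_mul hα.le, mul_sub_one, hαp, add_sub_cancel_left, Real.rpow_one]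
  have hkp : k ^ p < α * k := by
    rwa [Real.rpow_sub_one hk.1.ne', div_lt_iff₀ hk.1] at hkα
  calc A * (k * A ^ (-α)) ^ p = k ^ p * A ^ (-α) := by
        rw [mul_rpow_neg_rpow hαp hk.1.le hA.le, Real.rpow_sub_one hA.ne']
        field_simp
    _ < α * k * A ^ (-α) := mul_lt_mul_of_pos_right hkp (Real.rpow_pos_of_pos hA _)
    _ = α * (k * A ^ (-α)) := mul_assoc _ _ _

theorem exists_gt_mul_rpow_lt {A m : ℝ} (hm : 0 < m) (h : A * m ^ p < α * m) :
    ∃ M > m, A * M ^ p < α * M := by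
  have hcont : ContinuousAt (fun s : ℝ => A * s ^ p) m :=
    (Real.continuousAt_rpow_const m p (Or.inl hm.ne')).const_mul A
  have hev : ∀ᶠ s in 𝓝[>] m, A * s ^ p < α * s :=
    (hcont.eventually_lt (by fun_prop) h).filter_mono nhdsWithin_le_nhds
  obtain ⟨M, hM, hmM⟩ := (hev.and self_mem_nhdsWithin).exists
  exact ⟨M, hmM, hM⟩

theorem exists_forall_mul_rpow_neg_add_lt {β D ε : ℝ} (hβ : β < 0) (hε : ε < D) (C : ℝ) :
    ∃ τ > 0, ∀ s ∈ Ioc 0 τ, ε * s ^ β + C < D * s ^ β := by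
  have hev : ∀ᶠ s : ℝ in 𝓝[>] 0, ε * s ^ β + C < D * s ^ β := by
    filter_upwards [(tendsto_rpow_neg_nhdsGT_zero hβ).eventually_gt_atTop (C / (D - ε))] with s hs
    rw [div_lt_iff₀ (sub_pos.2 hε)] at hs
    linarith
  obtain ⟨τ, hτ, hsub⟩ := mem_nhdsGT_iff_exists_Ioc_subset.1 hev
  exact ⟨τ, hτ, fun s hs => hsub hs⟩

end Rpow

/-- The profile `m (b - t)^(-α)` with blow-up time `b`. When `α (p - 1) = 1`, it solves
`dy/dt = A y ^ p` for `m = (α / A) ^ α`, and is a strict supersolution for smaller positive `m`. -/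
noncomputable def blowupProfile (α m b t : ℝ) : ℝ :=
  m * (b - t) ^ (-α)

section BlowupProfile

variable {α m b t : ℝ}

theorem hasDerivAt_blowupProfile (α m : ℝ) (h : t < b) :
    HasDerivAt (blowupProfile α m b) (α * m * (b - t) ^ (-α - 1)) t := by
  have hpow := ((((hasDerivAt_id t).const_sub b).rpow_const (p := -α)
    (Or.inl (sub_pos.2 h).ne')).const_mul m)
  exact hpow.congr_deriv (by simp only [id]; ring)

theorem blowupProfile_rpow {p : ℝ} (hαp : α * p = α + 1) (hm : 0 ≤ m) (h : t < b) :
    blowupProfile α m b t ^ p = m ^ p * (b - t) ^ (-α - 1) :=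
  mul_rpow_neg_rpow hαp hm (sub_pos.2 h).le

theorem blowupProfile_le_blowupProfile {b' t' : ℝ} (hα : 0 ≤ α) (hm : 0 ≤ m) (h : t' < b')
    (hle : b' - t' ≤ b - t) : blowupProfile α m b t ≤ blowupProfile α m b' t' :=
  mul_le_mul_of_nonneg_left
    (Real.rpow_le_rpow_of_nonpos (sub_pos.2 h) hle (neg_nonpos.2 hα)) hm

theorem blowupProfile_lt_blowupProfile_of_lt {M : ℝ} (hmM : m < M) (h : t < b) :
    blowupProfile α m b t < blowupProfile α M b t :=
  mul_lt_mul_of_pos_right hmM (Real.rpow_pos_of_pos (sub_pos.2 h) _)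

theorem le_blowupProfile_iff {y : ℝ} (h : t < b) :
    y ≤ blowupProfile α m b t ↔ (b - t) ^ α * y ≤ m := by
  have hs : 0 < b - t := sub_pos.2 h
  rw [blowupProfile, Real.rpow_neg hs.le, ← div_eq_mul_inv,
    le_div_iff₀' (Real.rpow_pos_of_pos hs α)]

theorem laplacian_blowupProfile_comp {E : Type*} [NormedAddCommGroup E] [InnerProductSpace ℝ E]
    [FiniteDimensional ℝ E] (α m : ℝ) {θ : E → ℝ} {x : E} (hθ : ContDiffAt ℝ 2 θ x)
    (h : t < θ x) :
    Δ (fun y => blowupProfile α m (θ y) t) x =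
      α * m * ((α + 1) * (θ x - t) ^ (-α - 2) * ‖fderiv ℝ θ x‖ ^ 2
        - (θ x - t) ^ (-α - 1) * Δ θ x) := by
  have hpow (β : ℝ) {s : ℝ} (hs : t < s) :
      HasDerivAt (fun s => (s - t) ^ β) (β * (s - t) ^ (β - 1)) s := by
    simpa using ((hasDerivAt_id s).sub_const t).rpow_const (p := β) (Or.inl (sub_pos.2 hs).ne')
  have hfst : ∀ᶠ s in 𝓝 (θ x), HasDerivAt (fun s => blowupProfile α m s t)
      (m * (-α * (s - t) ^ (-α - 1))) s := by
    filter_upwards [lt_mem_nhds h] with s hs using (hpow (-α) hs).const_mul m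
  rw [laplacian_comp hθ hfst (((hpow (-α - 1) h).const_mul (-α)).const_mul m),
    show -α - 1 - 1 = -α - 2 by ring]
  ring

end BlowupProfile

/-- The blow-up time `T + c (ρ² - ‖x - x₀‖²)²`, which equals `T` on the sphere of radius `ρ` and
is delayed inside it. Substituted into `blowupProfile`, it gives a barrier which is bounded up to
time `T` on smaller balls. -/
def delayedTime {E : Type*} [NormedAddCommGroup E] (T c ρ : ℝ) (x₀ x : E) : ℝ :=
  T + c * (ρ ^ 2 - ‖x - x₀‖ ^ 2) ^ 2

section DelayedTime

section Bounds

variable {E : Type*} [NormedAddCommGroup E] {T c ρ : ℝ} {x₀ x : E}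

theorem norm_sub_sq_le_of_mem_closedBall (hx : x ∈ closedBall x₀ ρ) : ‖x - x₀‖ ^ 2 ≤ ρ ^ 2 :=
  pow_le_pow_left₀ (norm_nonneg _) (mem_closedBall_iff_norm.1 hx) 2

theorem le_delayedTime (T ρ : ℝ) (x₀ x : E) (hc : 0 ≤ c) : T ≤ delayedTime T c ρ x₀ x :=
  le_add_of_nonneg_right (by positivity)

theorem delayedTime_of_mem_sphere (T c : ℝ) (hx : x ∈ sphere x₀ ρ) :
    delayedTime T c ρ x₀ x = T := by
  simp [delayedTime, mem_sphere_iff_norm.1 hx]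

theorem delayedTime_le (T : ℝ) (hc : 0 ≤ c) (hx : x ∈ closedBall x₀ ρ) :
    delayedTime T c ρ x₀ x ≤ T + c * (ρ ^ 2) ^ 2 := by
  have hq := norm_sub_sq_le_of_mem_closedBall hx
  have hsq := pow_le_pow_left₀ (sub_nonneg.2 hq) (sub_le_self _ (sq_nonneg ‖x - x₀‖)) 2
  exact add_le_add le_rfl (mul_le_mul_of_nonneg_left hsq hc)

theorem add_le_delayedTime {ρ' : ℝ} (T : ℝ) (hc : 0 ≤ c) (hρ' : 0 ≤ ρ') (hρ : ρ' ≤ ρ)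
    (hx : x ∈ closedBall x₀ ρ') :
    T + c * (ρ ^ 2 - ρ' ^ 2) ^ 2 ≤ delayedTime T c ρ x₀ x := by
  have hq := norm_sub_sq_le_of_mem_closedBall hx
  unfold delayedTime
  gcongr
  nlinarith

end Bounds

variable {E : Type*} [NormedAddCommGroup E] [InnerProductSpace ℝ E]

theorem contDiff_delayedTime (T c ρ : ℝ) (x₀ : E) : ContDiff ℝ 2 (delayedTime T c ρ x₀) :=
  contDiff_const.add (contDiff_const.mul
    ((contDiff_const.sub ((contDiff_id.sub contDiff_const).norm_sq ℝ)).pow 2))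

theorem hasDerivAt_add_mul_sub_sq (T c d s : ℝ) :
    HasDerivAt (fun s => T + c * (d - s) ^ 2) (-(2 * c) * (d - s)) s :=
  (((((hasDerivAt_id s).const_sub d).pow 2).const_mul c).const_add T).congr_deriv
    (by simp only [id]; ring)

theorem norm_fderiv_delayedTime_sq (T c ρ : ℝ) (x₀ x : E) :
    ‖fderiv ℝ (delayedTime T c ρ x₀) x‖ ^ 2 =
      16 * c ^ 2 * (ρ ^ 2 - ‖x - x₀‖ ^ 2) ^ 2 * ‖x - x₀‖ ^ 2 := by
  have hnorm : HasFDerivAt (fun y => ‖y - x₀‖ ^ 2) (fderiv ℝ (fun y => ‖y - x₀‖ ^ 2) x) x :=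
    (hasFDerivAt_norm_sub_sq x₀ x).differentiableAt.hasFDerivAt
  have hcomp := (hasDerivAt_add_mul_sub_sq T c (ρ ^ 2) (‖x - x₀‖ ^ 2)).comp_hasFDerivAt x hnorm
  rw [show fderiv ℝ (delayedTime T c ρ x₀) x = _ from hcomp.fderiv, norm_smul,
    norm_fderiv_norm_sub_sq, mul_pow, Real.norm_eq_abs, sq_abs]
  ring

theorem laplacian_delayedTime [FiniteDimensional ℝ E] (T c ρ : ℝ) (x₀ x : E) :
    Δ (delayedTime T c ρ x₀) x =
      8 * c * ‖x - x₀‖ ^ 2 - 4 * finrank ℝ E * c * (ρ ^ 2 - ‖x - x₀‖ ^ 2) := by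
  have hderiv₂ (s : ℝ) : HasDerivAt (fun s => -(2 * c) * (ρ ^ 2 - s)) (2 * c) s :=
    (((hasDerivAt_id s).const_sub (ρ ^ 2)).const_mul (-(2 * c))).congr_deriv (by ring)
  have hnorm : ContDiffAt ℝ 2 (fun y => ‖y - x₀‖ ^ 2) x :=
    (contDiffAt_id.sub contDiffAt_const).norm_sq ℝ
  have hcomp := laplacian_comp hnorm
    (Eventually.of_forall (hasDerivAt_add_mul_sub_sq T c (ρ ^ 2))) (hderiv₂ _)
  rw [norm_fderiv_norm_sub_sq, laplacian_norm_sub_sq] at hcomp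
  exact hcomp.trans (by ring)

theorem laplacian_blowupProfile_delayedTime_le [FiniteDimensional ℝ E] {α m T c ρ t : ℝ}
    {x₀ x : E} (hα : 0 ≤ α) (hm : 0 ≤ m) (hc : 0 ≤ c) (ht : t < T) (hx : x ∈ closedBall x₀ ρ) :
    Δ (fun y => blowupProfile α m (delayedTime T c ρ x₀ y) t) x ≤
      α * m * (delayedTime T c ρ x₀ x - t) ^ (-α - 1) *
        (c * ((16 * (α + 1) + 4 * finrank ℝ E) * ρ ^ 2)) := by
  have htθ : t < delayedTime T c ρ x₀ x := ht.trans_le (le_delayedTime T ρ x₀ x hc)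
  rw [laplacian_blowupProfile_comp α m (contDiff_delayedTime T c ρ x₀).contDiffAt htθ]
  set s := delayedTime T c ρ x₀ x - t with hs_def
  have hs : 0 < s := sub_pos.2 htθ
  have hq := norm_sub_sq_le_of_mem_closedBall hx
  have hgrad : ‖fderiv ℝ (delayedTime T c ρ x₀) x‖ ^ 2 ≤ 16 * c * ρ ^ 2 * s :=
    calc ‖fderiv ℝ (delayedTime T c ρ x₀) x‖ ^ 2
        = 16 * c * ‖x - x₀‖ ^ 2 * (c * (ρ ^ 2 - ‖x - x₀‖ ^ 2) ^ 2) := by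
          rw [norm_fderiv_delayedTime_sq]; ring
      _ ≤ 16 * c * ρ ^ 2 * s := by
          gcongr
          rw [hs_def, delayedTime]
          linarith
  have hlap : -(4 * finrank ℝ E * c * ρ ^ 2) ≤ Δ (delayedTime T c ρ x₀) x := by
    have hn : 4 * finrank ℝ E * c * (ρ ^ 2 - ‖x - x₀‖ ^ 2) ≤ 4 * finrank ℝ E * c * ρ ^ 2 := by
      gcongr
      linarith [sq_nonneg ‖x - x₀‖]
    have hpos : 0 ≤ 8 * c * ‖x - x₀‖ ^ 2 := by positivity
    rw [laplacian_delayedTime]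
    linarith
  have hpow : s ^ (-α - 1) = s ^ (-α - 2) * s := by
    rw [← Real.rpow_add_one hs.ne']
    ring_nf
  calc α * m * ((α + 1) * s ^ (-α - 2) * ‖fderiv ℝ (delayedTime T c ρ x₀) x‖ ^ 2
        - s ^ (-α - 1) * Δ (delayedTime T c ρ x₀) x)
      ≤ α * m * ((α + 1) * s ^ (-α - 2) * (16 * c * ρ ^ 2 * s)
        - s ^ (-α - 1) * -(4 * finrank ℝ E * c * ρ ^ 2)) := by gcongr
    _ = α * m * s ^ (-α - 1) * (c * ((16 * (α + 1) + 4 * finrank ℝ E) * ρ ^ 2)) := by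
      rw [hpow]; ring

end DelayedTime

/-- Nonnegative classical subsolutions of `u_t - Δu = A u ^ p` on `I × Ω`, that is, the nonnegative
classical solutions of the differential inequality `u_t - Δu ≤ A u ^ p`. -/
structure IsSubsolutionOn {E : Type*} [NormedAddCommGroup E] [InnerProductSpace ℝ E]
    [FiniteDimensional ℝ E] (A p : ℝ) (u : ℝ → E → ℝ) (I : Set ℝ) (Ω : Set E) : Prop where
  nonneg : ∀ t ∈ I, ∀ x ∈ Ω, 0 ≤ u t x
  differentiableAt : ∀ t ∈ I, ∀ x ∈ Ω, DifferentiableAt ℝ (fun s => u s x) t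
  contDiffAt : ∀ t ∈ I, ∀ x ∈ Ω, ContDiffAt ℝ 2 (u t) x
  deriv_sub_laplacian_le : ∀ t ∈ I, ∀ x ∈ Ω, deriv (fun s => u s x) t - Δ (u t) x ≤ A * u t x ^ p

section Subsolution

variable {E : Type*} [NormedAddCommGroup E] [InnerProductSpace ℝ E] [FiniteDimensional ℝ E]
  {A p : ℝ} {u : ℝ → E → ℝ} {I : Set ℝ} {Ω : Set E}

theorem IsSubsolutionOn.mono (hu : IsSubsolutionOn A p u I Ω) {I' : Set ℝ} {Ω' : Set E}
    (hI : I' ⊆ I) (hΩ : Ω' ⊆ Ω) : IsSubsolutionOn A p u I' Ω' where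
  nonneg t ht x hx := hu.nonneg t (hI ht) x (hΩ hx)
  differentiableAt t ht x hx := hu.differentiableAt t (hI ht) x (hΩ hx)
  contDiffAt t ht x hx := hu.contDiffAt t (hI ht) x (hΩ hx)
  deriv_sub_laplacian_le t ht x hx := hu.deriv_sub_laplacian_le t (hI ht) x (hΩ hx)

variable {α m T t₀ : ℝ}

theorem IsSubsolutionOn.deriv_lt_of_le_blowupProfile (hu : IsSubsolutionOn A p u I Ω) (hα : 0 < α)
    (hαp : α * p = α + 1) (hA : 0 ≤ A) (hm : 0 ≤ m) {t : ℝ} {x : E} (ht : t ∈ I) (hx : x ∈ Ω)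
    (htT : t < T) (hΔ : Δ (u t) x < (α * m - A * m ^ p) * (T - t) ^ (-α - 1))
    (hle : u t x ≤ blowupProfile α m T t) :
    deriv (fun s => u s x) t < α * m * (T - t) ^ (-α - 1) := by
  have hp : 0 ≤ p := (pos_of_mul_pos_right (by linarith : 0 < α * p) hα.le).le
  have hreact : A * u t x ^ p ≤ A * (m ^ p * (T - t) ^ (-α - 1)) := by
    rw [← blowupProfile_rpow hαp hm htT]
    exact mul_le_mul_of_nonneg_left (Real.rpow_le_rpow (hu.nonneg t ht x hx) hle hp) hA
  linarith [hu.deriv_sub_laplacian_le t ht x hx]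

theorem IsSubsolutionOn.le_blowupProfile (hu : IsSubsolutionOn A p u (Ico t₀ T) Ω) (hα : 0 < α)
    (hαp : α * p = α + 1) (hA : 0 ≤ A) (hm : 0 ≤ m) {x : E} (hx : x ∈ Ω)
    (hΔ : ∀ t ∈ Ico t₀ T, Δ (u t) x < (α * m - A * m ^ p) * (T - t) ^ (-α - 1))
    (hinit : u t₀ x ≤ blowupProfile α m T t₀) {t : ℝ} (ht : t ∈ Ico t₀ T) :
    u t x ≤ blowupProfile α m T t := by
  have hsub {s : ℝ} (hs : s ∈ Icc t₀ t) : s ∈ Ico t₀ T := ⟨hs.1, hs.2.trans_lt ht.2⟩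
  have hderiv (s : ℝ) (hs : s ∈ Icc t₀ t) :=
    (hu.differentiableAt s (hsub hs) x hx).hasDerivAt
  have hprofile (s : ℝ) (hs : s ∈ Icc t₀ t) := hasDerivAt_blowupProfile α m (hsub hs).2
  refine image_le_of_deriv_right_lt_deriv_boundary'
    (fun s hs => (hderiv s hs).continuousAt.continuousWithinAt)
    (fun s hs => (hderiv s (Ico_subset_Icc_self hs)).hasDerivWithinAt) hinit
    (fun s hs => (hprofile s hs).continuousAt.continuousWithinAt)
    (fun s hs => (hprofile s (Ico_subset_Icc_self hs)).hasDerivWithinAt)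
    (fun s hs heq => ?_) (right_mem_Icc.2 ht.1)
  have hs' := hsub (Ico_subset_Icc_self hs)
  exact hu.deriv_lt_of_le_blowupProfile hα hαp hA hm hs' hx hs'.2 (hΔ s hs') heq.le

theorem IsSubsolutionOn.exists_forall_deriv_le (hu : IsSubsolutionOn A p u (Ico t₀ T) Ω)
    (hα : 0 < α) (hαp : α * p = α + 1) (hA : 0 ≤ A) (hm : 0 ≤ m)
    (hΔ : ∀ t ∈ Ico t₀ T, ∀ x ∈ Ω, Δ (u t) x < (α * m - A * m ^ p) * (T - t) ^ (-α - 1))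
    (hle : ∀ t ∈ Ico t₀ T, ∀ x ∈ Ω, u t x ≤ blowupProfile α m T t) {b : ℝ} (hb : b < T) :
    ∃ L, ∀ t ∈ Icc t₀ b, ∀ x ∈ Ω, deriv (fun s => u s x) t ≤ L := by
  refine ⟨α * m * (T - b) ^ (-α - 1), fun t ht x hx => ?_⟩
  have ht' : t ∈ Ico t₀ T := ⟨ht.1, ht.2.trans_lt hb⟩
  calc deriv (fun s => u s x) t ≤ α * m * (T - t) ^ (-α - 1) :=
        (hu.deriv_lt_of_le_blowupProfile hα hαp hA hm ht' hx ht'.2 (hΔ t ht' x hx)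
          (hle t ht' x hx)).le
    _ ≤ α * m * (T - b) ^ (-α - 1) := mul_le_mul_of_nonneg_left
        (Real.rpow_le_rpow_of_nonpos (sub_pos.2 hb) (by linarith [ht.2]) (by linarith))
        (by positivity)

variable {M c ρ : ℝ} {x₀ : E}

theorem IsSubsolutionOn.deriv_sub_lt_laplacian_sub_of_eq
    (hu : IsSubsolutionOn A p u I (closedBall x₀ ρ)) (hα : 0 ≤ α) (hαp : α * p = α + 1)
    (hM : 0 ≤ M) (hc : 0 ≤ c)
    (hMc : A * M ^ p < α * M * (1 - c * ((16 * (α + 1) + 4 * finrank ℝ E) * ρ ^ 2)))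
    {t : ℝ} {x : E} (ht : t ∈ I) (hx : x ∈ closedBall x₀ ρ) (htT : t < T)
    (heq : u t x = blowupProfile α M (delayedTime T c ρ x₀ x) t) :
    deriv (fun s => u s x) t - α * M * (delayedTime T c ρ x₀ x - t) ^ (-α - 1) <
      Δ (u t) x - Δ (fun y => blowupProfile α M (delayedTime T c ρ x₀ y) t) x := by
  have htθ : t < delayedTime T c ρ x₀ x := htT.trans_le (le_delayedTime T ρ x₀ x hc)
  have hpde := hu.deriv_sub_laplacian_le t ht x hx
  rw [heq, blowupProfile_rpow hαp hM htθ] at hpde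
  have hbarrier := laplacian_blowupProfile_delayedTime_le hα hM hc htT hx
  have hgap := mul_lt_mul_of_pos_right hMc (Real.rpow_pos_of_pos (sub_pos.2 htθ) (-α - 1))
  linarith

theorem IsSubsolutionOn.lt_blowupProfile_delayedTime
    (hu : IsSubsolutionOn A p u (Ico t₀ T) (closedBall x₀ ρ)) (hα : 0 ≤ α)
    (hαp : α * p = α + 1) (hM : 0 ≤ M) (hc : 0 ≤ c)
    (hMc : A * M ^ p < α * M * (1 - c * ((16 * (α + 1) + 4 * finrank ℝ E) * ρ ^ 2)))
    (hu_deriv : ∀ b < T, ∃ L, ∀ t ∈ Icc t₀ b, ∀ x ∈ closedBall x₀ ρ,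
      deriv (fun s => u s x) t ≤ L)
    (hu_sphere : ∀ t ∈ Ico t₀ T, ∀ x ∈ sphere x₀ ρ, u t x < blowupProfile α M T t)
    (hu_init : ∀ x ∈ closedBall x₀ ρ, u t₀ x < blowupProfile α M (delayedTime T c ρ x₀ x) t₀)
    {t : ℝ} {x : E} (ht : t ∈ Ico t₀ T) (hx : x ∈ closedBall x₀ ρ) :
    u t x < blowupProfile α M (delayedTime T c ρ x₀ x) t := by
  have htθ {t : ℝ} (ht : t < T) (x : E) : t < delayedTime T c ρ x₀ x :=
    ht.trans_le (le_delayedTime T ρ x₀ x hc)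
  let w (t : ℝ) (x : E) : ℝ := blowupProfile α M (delayedTime T c ρ x₀ x) t
  have hw_t {t : ℝ} (ht : t < T) (x : E) := hasDerivAt_blowupProfile α M (htθ ht x)
  have hw_x {t : ℝ} (ht : t < T) (x : E) : ContDiffAt ℝ 2 (w t) x :=
    (((contDiff_delayedTime T c ρ x₀).contDiffAt.sub contDiffAt_const).rpow_const_of_ne
      (sub_pos.2 (htθ ht x)).ne').const_smul M
  have hv_t {t : ℝ} (ht : t ∈ Ico t₀ T) {x : E} (hx : x ∈ closedBall x₀ ρ) :=
    (hu.differentiableAt t ht x hx).hasDerivAt.sub (hw_t ht.2 x)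
  refine sub_neg.1 <| neg_of_deriv_lt_laplacian_of_eq_zero (isCompact_closedBall x₀ ρ)
    (v := fun t => u t - w t) (fun t ht x hx => (hv_t ht hx).differentiableAt)
    (fun t ht x hx => (hu.contDiffAt t ht x hx).sub (hw_x ht.2 x)) (fun b hb => ?_)
    (fun x hx => sub_neg.2 (hu_init x hx)) (fun t ht x hx => sub_neg.2 ?_)
    (fun t ht x hx hzero => ?_) t ht x hx
  · obtain ⟨L, hL⟩ := hu_deriv b hb
    refine ⟨L, fun t ht x hx => ?_⟩
    have ht' : t ∈ Ico t₀ T := ⟨ht.1, ht.2.trans_lt hb⟩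
    have hpos : 0 ≤ (delayedTime T c ρ x₀ x - t) ^ (-α - 1) :=
      Real.rpow_nonneg (sub_nonneg.2 (htθ ht'.2 x).le) _
    exact (hv_t ht' hx).deriv.trans_le ((sub_le_self _ (by positivity)).trans (hL t ht x hx))
  · have hx' := frontier_closedBall_subset_sphere hx
    simpa only [w, delayedTime_of_mem_sphere T c hx'] using hu_sphere t ht x hx'
  · have hx' := interior_subset hx
    rw [(hu.contDiffAt t ht x hx').laplacian_sub (hw_x ht.2 x)]
    exact (hv_t ht hx').deriv.trans_lt
      (hu.deriv_sub_lt_laplacian_sub_of_eq hα hαp hM hc hMc ht hx' ht.2 (sub_eq_zero.1 hzero))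

theorem exists_pos_lt_mul_one_sub_and_blowupProfile_lt (h : A * M ^ p < α * M) (hmM : m < M)
    (ht₀ : t₀ < T) (N B : ℝ) :
    ∃ c > 0, A * M ^ p < α * M * (1 - c * N) ∧
      blowupProfile α m T t₀ < blowupProfile α M (T + c * B) t₀ := by
  have hcoeff : ∀ᶠ c in 𝓝 (0 : ℝ), A * M ^ p < α * M * (1 - c * N) :=
    continuousAt_const.eventually_lt (by fun_prop) (by simpa using h)
  have hprofile : ∀ᶠ c in 𝓝 (0 : ℝ),
      blowupProfile α m T t₀ < blowupProfile α M (T + c * B) t₀ := by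
    have hcont : ContinuousAt (fun c : ℝ => blowupProfile α M (T + c * B) t₀) 0 :=
      continuousAt_const.mul
        (ContinuousAt.rpow_const (by fun_prop) (Or.inl (by simpa using (sub_pos.2 ht₀).ne')))
    exact continuousAt_const.eventually_lt hcont
      (by simpa using blowupProfile_lt_blowupProfile_of_lt hmM ht₀)
  obtain ⟨c, hc, hc'⟩ := (((hcoeff.and hprofile).filter_mono
    (nhdsWithin_le_nhds (s := Ioi 0))).and self_mem_nhdsWithin).exists
  exact ⟨c, hc', hc⟩

theorem IsSubsolutionOn.exists_bound_of_laplacian_lt {r : ℝ}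
    (hu : IsSubsolutionOn A p u (Ico t₀ T) (ball x₀ r)) (hα : 0 < α) (hαp : α * p = α + 1)
    (hA : 0 ≤ A) (hm : 0 < m) (hAm : A * m ^ p < α * m) (ht₀ : t₀ < T)
    (hΔ : ∀ t ∈ Ico t₀ T, ∀ x ∈ ball x₀ r,
      Δ (u t) x < (α * m - A * m ^ p) * (T - t) ^ (-α - 1))
    (hinit : ∀ x ∈ ball x₀ r, u t₀ x ≤ blowupProfile α m T t₀) {ρ : ℝ} (hρ : ρ ∈ Ioo 0 r) :
    ∃ K > 0, ∀ t ∈ Ico t₀ T, ∀ x ∈ ball x₀ ρ, u t x ≤ K := by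
  have hle {t : ℝ} (ht : t ∈ Ico t₀ T) {x : E} (hx : x ∈ ball x₀ r) :
      u t x ≤ blowupProfile α m T t :=
    hu.le_blowupProfile hα hαp hA hm.le hx (fun t ht => hΔ t ht x hx) (hinit x hx) ht
  obtain ⟨R, hρR, hRr⟩ := exists_between hρ.2
  have hball : closedBall x₀ R ⊆ ball x₀ r := closedBall_subset_ball hRr
  obtain ⟨M, hmM, hM⟩ := exists_gt_mul_rpow_lt hm hAm
  have hM0 : 0 < M := hm.trans hmM
  obtain ⟨c, hc, hMc, hprofile⟩ := exists_pos_lt_mul_one_sub_and_blowupProfile_lt hM hmM ht₀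
    ((16 * (α + 1) + 4 * finrank ℝ E) * R ^ 2) ((R ^ 2) ^ 2)
  have hbarrier {t : ℝ} (ht : t ∈ Ico t₀ T) {x : E} (hx : x ∈ closedBall x₀ R) :
      u t x < blowupProfile α M (delayedTime T c R x₀ x) t := by
    refine (hu.mono subset_rfl hball).lt_blowupProfile_delayedTime hα.le hαp hM0.le hc.le hMc
      (fun b hb => (hu.mono subset_rfl hball).exists_forall_deriv_le hα hαp hA hm.le
        (fun t ht x hx => hΔ t ht x (hball hx)) (fun t ht x hx => hle ht (hball hx)) hb)
      (fun t ht x hx => ?_) (fun x hx => ?_) ht hx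
    · exact (hle ht (hball (sphere_subset_closedBall hx))).trans_lt
        (blowupProfile_lt_blowupProfile_of_lt hmM ht.2)
    · exact ((hinit x (hball hx)).trans_lt hprofile).trans_le
        (blowupProfile_le_blowupProfile hα.le hM0.le
          (ht₀.trans_le (le_delayedTime T R x₀ x hc.le))
          (sub_le_sub_right (delayedTime_le T hc.le hx) t₀))
  have hdelay : 0 < c * (R ^ 2 - ρ ^ 2) ^ 2 :=
    mul_pos hc (pow_pos (sub_pos.2 (pow_lt_pow_left₀ hρR hρ.1.le two_ne_zero)) 2)
  refine ⟨blowupProfile α M (T + c * (R ^ 2 - ρ ^ 2) ^ 2) T,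
    mul_pos hM0 (Real.rpow_pos_of_pos (by linarith) _), fun t ht x hx => ?_⟩
  have hx' := ball_subset_closedBall hx
  have hx_delay := add_le_delayedTime T hc.le hρ.1.le hρR.le hx'
  exact (hbarrier ht (closedBall_subset_closedBall hρR.le hx')).le.trans
    (blowupProfile_le_blowupProfile hα.le hM0.le (by linarith) (by linarith [ht.2]))

theorem stmt7_general {T₁ r ε C : ℝ} (hT : T₁ < T) (hα : 0 < α) (hαp : α * p = α + 1)
    (hA : 0 ≤ A) (hm : 0 < m) (hε : ε < α * m - A * m ^ p) (hAm : A * m ^ p < α * m)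
    (hu : IsSubsolutionOn A p u (Ioo T₁ T) (ball x₀ r))
    (hΔ : ∀ t ∈ Ioo T₁ T, ∀ x ∈ ball x₀ r, Δ (u t) x ≤ ε * (T - t) ^ (-α - 1) + C) :
    ∃ τ₀ > 0, ∀ t₀, T - τ₀ ≤ t₀ → t₀ < T →
      (∀ x ∈ ball x₀ r, (T - t₀) ^ α * u t₀ x ≤ m) →
      ∀ ρ ∈ Ioo 0 r, ∃ K > 0, ∀ t ∈ Ico t₀ T, ∀ x ∈ ball x₀ ρ, u t x ≤ K := by
  obtain ⟨τ, hτ, hsmall⟩ := exists_forall_mul_rpow_neg_add_lt (by linarith : -α - 1 < 0) hε C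
  refine ⟨min τ ((T - T₁) / 2), lt_min hτ (by linarith), fun t₀ hτt₀ ht₀ hinit ρ hρ => ?_⟩
  have hτ' := min_le_left τ ((T - T₁) / 2)
  have hT₁ := min_le_right τ ((T - T₁) / 2)
  have hsub : Ico t₀ T ⊆ Ioo T₁ T := fun t ht => ⟨by linarith [ht.1], ht.2⟩
  refine (hu.mono hsub subset_rfl).exists_bound_of_laplacian_lt hα hαp hA hm hAm ht₀
    (fun t ht x hx => (hΔ t (hsub ht) x hx).trans_lt (hsmall (T - t) ⟨?_, ?_⟩))
    (fun x hx => (le_blowupProfile_iff ht₀).2 (hinit x hx)) hρ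
  · exact sub_pos.2 ht.2
  · linarith [ht.1]

end Subsolution

theorem stmt7
    (n : ℕ) (p : ℝ) (hp : 1 < p)
    (r T A : ℝ) (hr : 0 < r) (hT : 0 < T) (hA : 0 < A)
    (x₀ : EuclideanSpace ℝ (Fin n))
    (u : ℝ → EuclideanSpace ℝ (Fin n) → ℝ)
    (hu_pos : ∀ t ∈ Ioo 0 T, ∀ x ∈ ball x₀ r, 0 < u t x)
    (hu_t : ∀ t ∈ Ioo 0 T, ∀ x ∈ ball x₀ r, DifferentiableAt ℝ (fun s => u s x) t)
    (hu_x : ∀ t ∈ Ioo 0 T, ∀ x ∈ ball x₀ r, ContDiffAt ℝ 2 (fun y => u t y) x)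
    (hineq : ∀ t ∈ Ioo 0 T, ∀ x ∈ ball x₀ r,
      deriv (fun s => u s x) t - lap (fun y => u t y) x ≤ A * u t x ^ p)
    (hΔbound : ∀ ε > 0, ∃ C > 0, ∀ t ∈ Ioo (T / 2) T, ∀ x ∈ ball x₀ r,
      lap (fun y => u t y) x ≤ ε * (T - t) ^ (-(1 / (p - 1)) - 1) + C)
    :
    ∀ k ∈ Ioo 0 ((1 / (p - 1)) ^ (1 / (p - 1)) : ℝ), ∃ τ₀ > 0, ∀ t₀ : ℝ,
      max (T - τ₀) 0 ≤ t₀ → t₀ < T →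
      (∀ x ∈ ball x₀ r, (T - t₀) ^ (1 / (p - 1)) * u t₀ x ≤ k * A ^ (-(1 / (p - 1)))) →
      ∃ K > 0, ∀ t ∈ Ico t₀ T, ∀ x ∈ ball x₀ (r / 4), u t x ≤ K := by
  intro k hk
  have hα : 0 < 1 / (p - 1) := one_div_pos.2 (sub_pos.2 hp)
  have hαp : 1 / (p - 1) * p = 1 / (p - 1) + 1 := by
    field_simp [(sub_pos.2 hp).ne']
    ring
  have hu : IsSubsolutionOn A p u (Ioo 0 T) (ball x₀ r) :=
    ⟨fun t ht x hx => (hu_pos t ht x hx).le, hu_t, hu_x, fun t ht x hx =>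
      lap_eq_laplacian (hu_x t ht x hx) ▸ hineq t ht x hx⟩
  have hsub : Ioo (T / 2) T ⊆ Ioo 0 T := Ioo_subset_Ioo_left (by positivity)
  have hAm := mul_rpow_lt_of_lt_rpow_self hα hαp hA hk
  obtain ⟨ε, hε, hεm⟩ := exists_between (sub_pos.2 hAm)
  obtain ⟨C, -, hC⟩ := hΔbound ε hε
  obtain ⟨τ₀, hτ₀, hbound⟩ := stmt7_general (half_lt_self hT) hα hαp hA.le
    (mul_pos hk.1 (Real.rpow_pos_of_pos hA _)) hεm hAm (hu.mono hsub subset_rfl)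
    fun t ht x hx => lap_eq_laplacian (hu_x t (hsub ht) x hx) ▸ hC t ht x hx
  exact ⟨τ₀, hτ₀, fun t₀ ht₀ ht₀T hinit =>
    hbound t₀ ((le_max_left _ _).trans ht₀) ht₀T hinit (r / 4) ⟨by positivity, by linarith⟩⟩
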